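/- arXiv:0712.2125 — 4 statements merged into one kernel-verified Lean document; each statement's English description precedes it below -/
import Mathlib

section
/- For all nonnegative integers m and n and every complex number x with x ≠ 1, one has (1-x)^{-(n+1)} = Σ_{k=0}^{m} ((n+1)_k / k!) x^k + x^{m+1} · Σ_{k=0}^{n} ((m+1)_k / k!) (1-x)^{k-n-1}, where negative powers of 1-x are interpreted as integer powers of the nonzero complex number 1-x. -/
open Polynomial

/-!
The coefficient `(a+1)_k / k!` is the binomial coefficient `C(a+k, k)`, so after multiplication by
`(1-x)^(n+1)` and with `y = 1 - x` the claim is the Chaundy–Bullard identity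
`y^(n+1) ∑_{k≤m} C(n+k,k) x^k + x^(m+1) ∑_{k≤n} C(m+k,k) y^k = 1`.

It is proved by induction on `m`. For `m = 0` it is the geometric sum. Raising `m` by one adds
`C(n+m+1, m+1) x^(m+1) y^(n+1)` to the first summand, and `cb_sum_step` (a telescoping form of
Pascal's rule) says that the second summand drops by exactly this amount.
-/

lemma ascPochhammer_div_factorial (a k : ℕ) :
    (ascPochhammer ℂ k).eval ((a : ℂ) + 1) / (k.factorial : ℂ) = ((a + k).choose k : ℂ) := by
  have h : (ascPochhammer ℂ k).eval ((a : ℂ) + 1) = ((a + 1).ascFactorial k : ℂ) := by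
    rw [← ascPochhammer_nat_eq_ascFactorial, ascPochhammer_eval_cast]
    push_cast
    rfl
  have hk : (k.factorial : ℂ) ≠ 0 := by exact_mod_cast k.factorial_ne_zero
  rw [h, Nat.ascFactorial_eq_factorial_mul_choose, div_eq_iff hk]
  push_cast
  ring

/-- Passing from `m` to `m + 1` in the truncated series of `(1-y)^(-(m+1))` costs a factor `1 - y`,
up to a single boundary term. -/
lemma cb_sum_step (m n : ℕ) (y : ℂ) :
    ∑ k ∈ Finset.range (n + 1), ((m + k).choose k : ℂ) * y ^ k =
      (1 - y) * ∑ k ∈ Finset.range (n + 1), ((m + 1 + k).choose k : ℂ) * y ^ k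
        + ((m + 1 + n).choose n : ℂ) * y ^ (n + 1) := by
  induction n with
  | zero => simp
  | succ n ih =>
    rw [Finset.sum_range_succ, ih, Finset.sum_range_succ _ (n + 1)]
    have pascal : ((m + 1 + (n + 1)).choose (n + 1) : ℂ)
        = (m + 1 + n).choose n + (m + (n + 1)).choose (n + 1) := by
      rw [show m + (n + 1) = m + 1 + n by ring, ← add_assoc, Nat.choose_succ_succ]
      push_cast
      rfl
    rw [pascal]
    ring

lemma chaundy_bullard (m n : ℕ) (x : ℂ) :
    (1 - x) ^ (n + 1) * ∑ k ∈ Finset.range (m + 1), ((n + k).choose k : ℂ) * x ^ k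
      + x ^ (m + 1) * ∑ k ∈ Finset.range (n + 1), ((m + k).choose k : ℂ) * (1 - x) ^ k = 1 := by
  induction m with
  | zero =>
    have h := mul_neg_geom_sum (1 - x) (n + 1)
    simp only [sub_sub_cancel] at h
    simp [h]
  | succ m ih =>
    rw [cb_sum_step m n (1 - x), sub_sub_cancel] at ih
    rw [Finset.sum_range_succ]
    have symm : ((n + (m + 1)).choose (m + 1) : ℂ) = (m + 1 + n).choose n := by
      rw [add_comm n, Nat.choose_symm_add]
    rw [symm]
    linear_combination ih

/-- The Chaundy–Bullard identity, divided by `(1-x)^(n+1)`. -/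
theorem chaundy_bullard_div (m n : ℕ) (x : ℂ) (hx : x ≠ 1) :
    (1 - x) ^ (-(n : ℤ) - 1) =
      (∑ k ∈ Finset.range (m + 1),
        (ascPochhammer ℂ k).eval ((n : ℂ) + 1) / (k.factorial : ℂ) * x ^ k)
      + x ^ (m + 1) * ∑ k ∈ Finset.range (n + 1),
        (ascPochhammer ℂ k).eval ((m : ℂ) + 1) / (k.factorial : ℂ)
          * (1 - x) ^ ((k : ℤ) - (n : ℤ) - 1) := by
  have hy : 1 - x ≠ 0 := sub_ne_zero.mpr hx.symm
  have hinv : (1 - x) ^ (-(n : ℤ) - 1) * (1 - x) ^ (n + 1) = 1 := by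
    rw [← zpow_natCast, ← zpow_add₀ hy]
    simp
  have hsplit (k : ℕ) :
      (1 - x) ^ ((k : ℤ) - (n : ℤ) - 1) = (1 - x) ^ k * (1 - x) ^ (-(n : ℤ) - 1) := by
    rw [← zpow_natCast, ← zpow_add₀ hy]
    congr 1
    ring
  simp only [ascPochhammer_div_factorial, hsplit, ← mul_assoc]
  rw [← Finset.sum_mul]
  linear_combination (-(1 - x) ^ (-(n : ℤ) - 1)) * chaundy_bullard m n x
    + (∑ k ∈ Finset.range (m + 1), ((n + k).choose k : ℂ) * x ^ k) * hinv
end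

section
/- For real numbers u, v, x ∈ (0,1), define f(u,v;x) := Σ_{m,n ≥ 0} u^m v^n (1-x)^{n+1} Σ_{k=0}^{m} C(n+k, k) x^k (a sum over ℕ × ℕ). Then f(u,v;x) + f(v,u;1-x) = 1 / ((1-u)(1-v)). -/
/-!
The identity holds coefficientwise: the coefficient of `u ^ m * v ^ n` on the left is
`(1 - x) ^ (n + 1) * ∑_{k ≤ m} C(n + k, k) x ^ k + x ^ (m + 1) * ∑_{k ≤ n} C(m + k, k) (1 - x) ^ k`,
which equals `1` by the Chaundy–Bullard identity (`chaundyBullard_identity`). That identity follows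
by induction on `m`, the change of the second summand being given by `one_sub_mul_sum_choose`.
As both summands are nonnegative, each lies in `[0, 1]`, so both double series are dominated by
`∑ u ^ m * v ^ n = 1 / ((1 - u) * (1 - v))` and may be added termwise.
-/

/-- `f(u,v;x)` : the generating function of the Chaundy–Bullard partial sums. -/
noncomputable def chaundyBullardGF (u v x : ℝ) : ℝ :=
  ∑' p : ℕ × ℕ,
    u ^ p.1 * v ^ p.2 * (1 - x) ^ (p.2 + 1)
      * ∑ k ∈ Finset.range (p.1 + 1), ((p.2 + k).choose k : ℝ) * x ^ k

/-- Multiplying by `1 - y` lowers the index `m + 1` to `m`, up to a boundary term: a truncated form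
of `(1 - y) * (1 - y) ^ (-(m + 2)) = (1 - y) ^ (-(m + 1))`. -/
lemma one_sub_mul_sum_choose (m n : ℕ) (y : ℝ) :
    (1 - y) * ∑ k ∈ Finset.range (n + 1), ((m + 1 + k).choose k : ℝ) * y ^ k
      = ∑ k ∈ Finset.range (n + 1), ((m + k).choose k : ℝ) * y ^ k
        - ((m + 1 + n).choose n : ℝ) * y ^ (n + 1) := by
  induction n with
  | zero => simp
  | succ n ih =>
    rw [Finset.sum_range_succ, mul_add, ih, Finset.sum_range_succ _ (n + 1)]
    have h : ((m + 1 + (n + 1)).choose (n + 1) : ℝ)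
        = ((m + 1 + n).choose n : ℝ) + ((m + (n + 1)).choose (n + 1) : ℝ) := by
      rw [show m + 1 + (n + 1) = (m + 1 + n) + 1 by ring, Nat.choose_succ_succ',
        show m + (n + 1) = m + 1 + n by ring]
      push_cast
      ring
    rw [h]
    ring

/-- The Chaundy–Bullard identity. -/
lemma chaundyBullard_identity (m n : ℕ) (x : ℝ) :
    (1 - x) ^ (n + 1) * ∑ k ∈ Finset.range (m + 1), ((n + k).choose k : ℝ) * x ^ k
      + x ^ (m + 1) * ∑ k ∈ Finset.range (n + 1), ((m + k).choose k : ℝ) * (1 - x) ^ k = 1 := by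
  induction m with
  | zero =>
    have h := mul_neg_geom_sum (1 - x) (n + 1)
    simp only [sub_sub_cancel] at h
    simp [h]
  | succ m ih =>
    have h := one_sub_mul_sum_choose m n (1 - x)
    simp only [sub_sub_cancel] at h
    have hs : ((m + 1 + n).choose n : ℝ) = ((n + (m + 1)).choose (m + 1) : ℝ) := by
      rw [add_comm n, Nat.choose_symm_add]
    rw [hs] at h
    rw [Finset.sum_range_succ, pow_succ x (m + 1), mul_assoc (x ^ (m + 1)), h]
    linear_combination ih

/-- Summability of the double series, by comparison with the product of geometric series. -/
lemma summable_chaundyBullardGF {u v x : ℝ}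
    (hu : u ∈ Set.Ioo (0:ℝ) 1) (hv : v ∈ Set.Ioo (0:ℝ) 1) (hx : x ∈ Set.Ioo (0:ℝ) 1) :
    Summable fun p : ℕ × ℕ => u ^ p.1 * v ^ p.2 * (1 - x) ^ (p.2 + 1)
      * ∑ k ∈ Finset.range (p.1 + 1), ((p.2 + k).choose k : ℝ) * x ^ k := by
  obtain ⟨hu0, hu1⟩ := hu
  obtain ⟨hv0, hv1⟩ := hv
  obtain ⟨hx0, hx1⟩ := hx
  have hy : 0 < 1 - x := sub_pos.2 hx1
  have hg : Summable fun p : ℕ × ℕ => u ^ p.1 * v ^ p.2 :=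
    (summable_geometric_of_lt_one hu0.le hu1).mul_of_nonneg
      (summable_geometric_of_lt_one hv0.le hv1) (fun _ => by positivity) (fun _ => by positivity)
  refine hg.of_nonneg_of_le (fun p => by positivity) fun p => ?_
  rw [mul_assoc]
  refine mul_le_of_le_one_right (by positivity) ?_
  refine le_of_le_of_eq (le_add_of_nonneg_right ?_) (chaundyBullard_identity p.1 p.2 x)
  positivity

theorem chaundyBullardGF_sum (u v x : ℝ)
    (hu : u ∈ Set.Ioo (0:ℝ) 1) (hv : v ∈ Set.Ioo (0:ℝ) 1) (hx : x ∈ Set.Ioo (0:ℝ) 1) :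
    chaundyBullardGF u v x + chaundyBullardGF v u (1 - x) = 1 / ((1 - u) * (1 - v)) := by
  have hx' : 1 - x ∈ Set.Ioo (0:ℝ) 1 := ⟨by linarith [hx.2], by linarith [hx.1]⟩
  have h₁ := summable_chaundyBullardGF hu hv hx
  have h₂ := (Equiv.prodComm ℕ ℕ).summable_iff.2 (summable_chaundyBullardGF hv hu hx')
  have hsu := summable_geometric_of_lt_one hu.1.le hu.2
  have hsv := summable_geometric_of_lt_one hv.1.le hv.2
  have hg : Summable fun p : ℕ × ℕ => u ^ p.1 * v ^ p.2 :=
    hsu.mul_of_nonneg hsv (fun n => pow_nonneg hu.1.le n) (fun n => pow_nonneg hv.1.le n)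
  unfold chaundyBullardGF
  -- Exchange the indices in the second series so that both are indexed by the exponents of `u, v`.
  rw [← (Equiv.prodComm ℕ ℕ).tsum_eq (fun p : ℕ × ℕ => v ^ p.1 * u ^ p.2 * _ * _)]
  have hadd := h₁.tsum_add h₂
  simp only [Function.comp_def] at hadd
  rw [← hadd, one_div, mul_inv, ← tsum_geometric_of_lt_one hu.1.le hu.2,
    ← tsum_geometric_of_lt_one hv.1.le hv.2, hsu.tsum_mul_tsum hsv hg]
  refine tsum_congr fun p => ?_
  simp only [Equiv.prodComm_apply, Prod.fst_swap, Prod.snd_swap, sub_sub_cancel]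
  linear_combination (u ^ p.1 * v ^ p.2) * chaundyBullard_identity p.1 p.2 x
end

section
/- Let n ≥ 2 be an integer and a_1, …, a_n nonnegative integers, and let σ be any permutation of {1,…,n}. Define v : ℝ^{n-1} → ℝ by v(x_1,…,x_{n-1}) := z_{σ(n)}^{a_{σ(n)}+1} · Σ_{k_1=0}^{a_{σ(1)}} ⋯ Σ_{k_{n-1}=0}^{a_{σ(n-1)}} ( (a_{σ(n)}+1)_{k_1+⋯+k_{n-1}} / (k_1! ⋯ k_{n-1}!) ) · z_{σ(1)}^{k_1} ⋯ z_{σ(n-1)}^{k_{n-1}}, where z_i := x_i for 1 ≤ i ≤ n-1 and z_n := 1 − x_1 − ⋯ − x_{n-1}. Then v satisfies on all of ℝ^{n-1} the partial differential equation Σ_{i=1}^{n-1} x_i (1 - x_i) ∂²v/∂x_i² − 2 Σ_{1 ≤ i < j ≤ n-1} x_i x_j ∂²v/∂x_i∂x_j + Σ_{i=1}^{n-1} ( (a_1+⋯+a_n) x_i − a_i ) ∂v/∂x_i = 0. -/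
/-! In the barycentric coordinates `z_1, …, z_n` with `z_n = 1 - x_1 - ⋯ - x_{n-1}`, the
differential operator becomes
`∑ z_j ∂_j² - ∑ z_j z_l ∂_j ∂_l + ∑ ((a_1 + ⋯ + a_n) z_j - a_j) ∂_j`, applied to any extension of
the function to `n` independent variables (`operator_barycentric`, `pd_eval`). This form is
symmetric under simultaneous permutations of the `z_j` and the `a_j`, which disposes of `σ`.

On a monomial `z^m` of degree `M` the operator yields
`∑ m_j (m_j - 1 - a_j) z^{m - e_j} - M (M - 1 - (a_1 + ⋯ + a_n)) z^m` (`baryOp_monomial`). For the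
monomials of the function at hand the exponent of the last variable is `a_n + 1`, so its lowering
term vanishes, and the recurrence `c_{k + e_i} (k_i + 1) = c_k (a_n + 1 + |k|)` of the coefficients
makes the remaining terms cancel after shifting indices (`baryOp_cbPoly`). The boundary terms of the
shift vanish because of the factor `k_i - a_i`. -/

open Polynomial

/-- Partial derivative in the `i`-th coordinate direction. -/
noncomputable def pd {N : ℕ} (i : Fin N) (f : (Fin N → ℝ) → ℝ) : (Fin N → ℝ) → ℝ :=
  fun y => fderiv ℝ f y (Pi.single i 1)

/-! ### The operator in barycentric coordinates -/

/-- A symmetric double sum is its diagonal plus twice its strictly upper triangular part. -/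
lemma sum_sum_symm {N : ℕ} (f : Fin N → Fin N → ℝ) (hf : ∀ i j, f i j = f j i) :
    ∑ i, ∑ j, f i j
      = ∑ i, f i i + 2 * ∑ i, ∑ j ∈ Finset.univ.filter (fun j => i < j), f i j := by
  have h1 : ∀ i j, f i j = (if i = j then f i j else 0) + (if i < j then f i j else 0)
      + (if j < i then f j i else 0) := by
    intro i j
    rcases lt_trichotomy i j with h | h | h
    · simp [h, h.ne, h.not_gt]
    · simp [h]
    · simp [h, h.ne', h.not_gt, hf i j]
  have h2 : ∑ i, ∑ j, f i j = ∑ i, f i i + ∑ i, ∑ j, (if i < j then f i j else 0)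
      + ∑ i, ∑ j, (if j < i then f j i else 0) := by
    rw [Finset.sum_congr rfl fun i _ => Finset.sum_congr rfl fun j _ => h1 i j]
    simp [Finset.sum_add_distrib]
  rw [h2, Finset.sum_comm (f := fun i j => if j < i then f j i else 0)]
  simp only [Finset.sum_filter]
  ring

/-- Passage to barycentric coordinates at the level of derivative values: `p` and `g` are the second
and first partial derivatives of an extension to all `N + 1` coordinates, so that `∂/∂x_i` becomes
the difference of the partial derivatives in the directions `i` and `last`. -/
lemma operator_barycentric {N : ℕ} (x : Fin N → ℝ) (a g : Fin (N + 1) → ℝ)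
    (p : Fin (N + 1) → Fin (N + 1) → ℝ) (hp : ∀ i j, p i j = p j i)
    (z : Fin (N + 1) → ℝ) (hz : z = Fin.snoc x (1 - ∑ j, x j)) :
    ∑ i, x i * (1 - x i) * (p i.castSucc i.castSucc - p i.castSucc (Fin.last N)
          - (p (Fin.last N) i.castSucc - p (Fin.last N) (Fin.last N)))
      - 2 * (∑ i, ∑ j ∈ Finset.univ.filter (fun j => i < j), x i * x j *
          (p i.castSucc j.castSucc - p i.castSucc (Fin.last N)
          - (p (Fin.last N) j.castSucc - p (Fin.last N) (Fin.last N))))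
      + ∑ i, ((∑ j, a j) * x i - a i.castSucc) * (g i.castSucc - g (Fin.last N))
    = ∑ m, z m * p m m - ∑ m, ∑ l, z m * z l * p m l + ∑ m, ((∑ j, a j) * z m - a m) * g m := by
  have hs := sum_sum_symm (fun i j => x i * x j *
          (p i.castSucc j.castSucc - p i.castSucc (Fin.last N)
          - (p (Fin.last N) j.castSucc - p (Fin.last N) (Fin.last N))))
      (fun i j => by rw [hp i.castSucc j.castSucc, hp i.castSucc (Fin.last N),
        hp j.castSucc (Fin.last N)]; ring)
  have hA : ∑ j, a j = ∑ j : Fin N, a j.castSucc + a (Fin.last N) := Fin.sum_univ_castSucc _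
  have hd : ∑ i, x i * (1 - x i) * (p i.castSucc i.castSucc - p i.castSucc (Fin.last N)
          - (p (Fin.last N) i.castSucc - p (Fin.last N) (Fin.last N)))
      = ∑ i, x i * p i.castSucc i.castSucc - 2 * ∑ i, x i * p i.castSucc (Fin.last N)
        + (∑ i, x i) * p (Fin.last N) (Fin.last N)
        - ∑ i, x i * x i * (p i.castSucc i.castSucc - p i.castSucc (Fin.last N)
          - (p (Fin.last N) i.castSucc - p (Fin.last N) (Fin.last N))) := by
    rw [Finset.mul_sum, Finset.sum_mul, ← Finset.sum_sub_distrib, ← Finset.sum_add_distrib,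
      ← Finset.sum_sub_distrib]
    refine Finset.sum_congr rfl fun i _ => ?_
    rw [hp (Fin.last N) i.castSucc]; ring
  have hq : ∑ i, ∑ j, x i * x j *
          (p i.castSucc j.castSucc - p i.castSucc (Fin.last N)
          - (p (Fin.last N) j.castSucc - p (Fin.last N) (Fin.last N)))
      = ∑ i, ∑ j, x i * x j * p i.castSucc j.castSucc
        - 2 * (∑ i, x i) * ∑ i, x i * p i.castSucc (Fin.last N)
        + (∑ i, x i) * (∑ i, x i) * p (Fin.last N) (Fin.last N) := by
    have e1 : (∑ i, x i) * ∑ i, x i * p i.castSucc (Fin.last N)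
        = ∑ i, ∑ j, x i * x j * p i.castSucc (Fin.last N) := by
      rw [mul_comm, Finset.sum_mul_sum]
      exact Finset.sum_congr rfl fun i _ => Finset.sum_congr rfl fun j _ => by ring
    have e2 : (∑ i, x i) * ∑ i, x i * p i.castSucc (Fin.last N)
        = ∑ i, ∑ j, x i * x j * p (Fin.last N) j.castSucc := by
      rw [Finset.sum_mul_sum]
      exact Finset.sum_congr rfl fun i _ => Finset.sum_congr rfl fun j _ => by
        rw [hp (Fin.last N)]; ring
    have e3 : (∑ i, x i) * (∑ i, x i) * p (Fin.last N) (Fin.last N)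
        = ∑ i, ∑ j, x i * x j * p (Fin.last N) (Fin.last N) := by
      rw [Finset.sum_mul_sum]
      simp only [Finset.sum_mul]
    have e4 : 2 * (∑ i, x i) * ∑ i, x i * p i.castSucc (Fin.last N)
        = ∑ i, ∑ j, x i * x j * p i.castSucc (Fin.last N)
          + ∑ i, ∑ j, x i * x j * p (Fin.last N) j.castSucc := by
      rw [← e1, ← e2]; ring
    rw [e4, e3]
    simp only [← Finset.sum_sub_distrib, ← Finset.sum_add_distrib]
    exact Finset.sum_congr rfl fun i _ => Finset.sum_congr rfl fun j _ => by ring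
  have hg : ∑ i, ((∑ j, a j) * x i - a i.castSucc) * (g i.castSucc - g (Fin.last N))
      = ∑ i, ((∑ j, a j) * x i - a i.castSucc) * g i.castSucc
        - ((∑ j, a j) * (∑ i, x i) - ∑ j : Fin N, a j.castSucc) * g (Fin.last N) := by
    rw [Finset.mul_sum, ← Finset.sum_sub_distrib, Finset.sum_mul, ← Finset.sum_sub_distrib]
    exact Finset.sum_congr rfl fun i _ => by ring
  have hr : ∑ m, ∑ l, z m * z l * p m l = ∑ i, ∑ j, x i * x j * p i.castSucc j.castSucc
      + 2 * (1 - ∑ i, x i) * (∑ i, x i * p i.castSucc (Fin.last N))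
      + (1 - ∑ i, x i) * (1 - ∑ i, x i) * p (Fin.last N) (Fin.last N) := by
    have e1 : ∑ i, x i * (1 - ∑ j, x j) * p i.castSucc (Fin.last N)
        = (1 - ∑ i, x i) * (∑ i, x i * p i.castSucc (Fin.last N)) := by
      rw [Finset.mul_sum]
      exact Finset.sum_congr rfl fun i _ => by ring
    have e2 : ∑ i, (1 - ∑ j, x j) * x i * p (Fin.last N) i.castSucc
        = (1 - ∑ i, x i) * (∑ i, x i * p i.castSucc (Fin.last N)) := by
      rw [Finset.mul_sum]
      exact Finset.sum_congr rfl fun i _ => by rw [hp (Fin.last N)]; ring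
    simp only [hz, Fin.sum_univ_castSucc, Fin.snoc_castSucc, Fin.snoc_last,
      Finset.sum_add_distrib]
    rw [e1, e2]
    ring
  rw [hd, hg, hr]
  simp only [hz, Fin.sum_univ_castSucc (n := N), Fin.snoc_castSucc, Fin.snoc_last] at hA hs hq ⊢
  linear_combination hs - hq

/-- The operator in barycentric coordinates is invariant under relabelling the coordinates. -/
lemma operator_reindex {ι : Type*} [Fintype ι] (σ : Equiv.Perm ι) (z a g : ι → ℝ)
    (p : ι → ι → ℝ) :
    ∑ m, z m * p m m - ∑ m, ∑ l, z m * z l * p m l + ∑ m, ((∑ j, a j) * z m - a m) * g m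
      = ∑ m, z (σ m) * p (σ m) (σ m) - ∑ m, ∑ l, z (σ m) * z (σ l) * p (σ m) (σ l)
        + ∑ m, ((∑ j, a (σ j)) * z (σ m) - a (σ m)) * g (σ m) := by
  rw [Equiv.sum_comp σ a, Equiv.sum_comp σ (fun m => z m * p m m),
    Equiv.sum_comp σ (fun m => ((∑ j, a j) * z m - a m) * g m),
    ← Equiv.sum_comp σ (fun m => ∑ l, z m * z l * p m l)]
  congr 2
  exact Finset.sum_congr rfl fun m _ =>
    (Equiv.sum_comp σ (fun l => z (σ m) * z l * p (σ m) l)).symm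

/-! ### Partial derivatives of polynomials in the barycentric coordinates -/

/-- Chain rule for a polynomial in functions `ζ j` whose differentials `ℓ j` are given. -/
lemma hasFDerivAt_eval {E ι : Type*} [NormedAddCommGroup E] [NormedSpace ℝ E] [Fintype ι]
    (ζ : ι → E → ℝ) (ℓ : ι → E →L[ℝ] ℝ) (x : E) (h : ∀ j, HasFDerivAt (ζ j) (ℓ j) x)
    (Q : MvPolynomial ι ℝ) :
    HasFDerivAt (fun y => MvPolynomial.eval (fun j => ζ j y) Q)
      (∑ j, MvPolynomial.eval (fun j => ζ j x) (MvPolynomial.pderiv j Q) • ℓ j) x := by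
  classical
  induction Q using MvPolynomial.induction_on with
  | C c => simpa using hasFDerivAt_const c x
  | add P Q hP hQ =>
    simpa [add_smul, Finset.sum_add_distrib] using hP.fun_add hQ
  | mul_X P m hP =>
    have := hP.fun_mul (h m)
    simp only [map_mul, MvPolynomial.eval_X]
    refine this.congr_fderiv ?_
    simp only [MvPolynomial.pderiv_mul, MvPolynomial.pderiv_X, map_add, map_mul,
      MvPolynomial.eval_X, add_smul, Finset.sum_add_distrib, Finset.smul_sum, smul_smul]
    rw [add_comm]
    congr 1
    · exact Finset.sum_congr rfl fun j _ => by rw [mul_comm]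
    · rw [Finset.sum_eq_single m]
      · simp
      · intro j _ hj
        simp [Ne.symm hj]
      · simp

lemma hasFDerivAt_snoc {N : ℕ} (x : Fin N → ℝ) (m : Fin (N + 1)) :
    HasFDerivAt (fun y : Fin N → ℝ => (Fin.snoc y (1 - ∑ j, y j) : Fin (N + 1) → ℝ) m)
      ((Fin.snoc (fun i => ContinuousLinearMap.proj i)
        (-∑ i, ContinuousLinearMap.proj i) : Fin (N + 1) → ((Fin N → ℝ) →L[ℝ] ℝ)) m) x := by
  induction m using Fin.lastCases with
  | last =>
    simp only [Fin.snoc_last]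
    exact (HasFDerivAt.fun_sum fun i _ => hasFDerivAt_apply i x).const_sub 1
  | cast i =>
    simp only [Fin.snoc_castSucc]
    exact hasFDerivAt_apply i x

/-- `∂/∂x_i` acts on polynomials in the (permuted) barycentric coordinates as the difference of the
polynomial partial derivatives in the directions of `z_i` and of the last coordinate. -/
lemma pd_eval {N : ℕ} (σ : Equiv.Perm (Fin (N + 1))) (i : Fin N)
    (Q : MvPolynomial (Fin (N + 1)) ℝ) :
    pd i (fun y : Fin N → ℝ =>
        MvPolynomial.eval (fun j => (Fin.snoc y (1 - ∑ j, y j) : Fin (N + 1) → ℝ) (σ j)) Q)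
      = fun y => MvPolynomial.eval
          (fun j => (Fin.snoc y (1 - ∑ j, y j) : Fin (N + 1) → ℝ) (σ j))
          (MvPolynomial.pderiv (σ.symm i.castSucc) Q
            - MvPolynomial.pderiv (σ.symm (Fin.last N)) Q) := by
  funext y
  have h := hasFDerivAt_eval
    (fun j (y : Fin N → ℝ) => (Fin.snoc y (1 - ∑ j, y j) : Fin (N + 1) → ℝ) (σ j)) _ y
    (fun j => hasFDerivAt_snoc y (σ j)) Q
  unfold pd
  rw [h.fderiv, ← Equiv.sum_comp σ.symm]
  simp [Fin.sum_univ_castSucc, Pi.single_apply, sub_eq_add_neg]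

lemma pderiv_comm {ι : Type*} (i j : ι) (Q : MvPolynomial ι ℝ) :
    MvPolynomial.pderiv i (MvPolynomial.pderiv j Q)
      = MvPolynomial.pderiv j (MvPolynomial.pderiv i Q) := by
  classical
  have h : ⁅(MvPolynomial.pderiv i : Derivation ℝ (MvPolynomial ι ℝ) (MvPolynomial ι ℝ)),
      (MvPolynomial.pderiv j : Derivation ℝ (MvPolynomial ι ℝ) (MvPolynomial ι ℝ))⁆ = 0 := by
    apply MvPolynomial.derivation_ext
    intro l
    simp [Derivation.commutator_apply, MvPolynomial.pderiv_X, Pi.single_apply]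
    split_ifs <;> simp
  have := congrArg (fun D => D Q) h
  simpa [Derivation.commutator_apply, sub_eq_zero] using this

/-! ### Action on monomials -/

/-- The differential operator
`∑ z_j ∂_j² - ∑ z_j z_l ∂_j ∂_l + ∑ ((b_1 + ⋯ + b_n) z_j - b_j) ∂_j`
in barycentric coordinates, applied to the polynomial `Q` and evaluated at the point `w`. -/
noncomputable def baryOp {ι : Type*} [Fintype ι] (b w : ι → ℝ) (Q : MvPolynomial ι ℝ) : ℝ :=
  ∑ j, w j * MvPolynomial.eval w (MvPolynomial.pderiv j (MvPolynomial.pderiv j Q))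
    - ∑ j, ∑ l, w j * w l * MvPolynomial.eval w (MvPolynomial.pderiv j (MvPolynomial.pderiv l Q))
    + ∑ j, ((∑ i, b i) * w j - b j) * MvPolynomial.eval w (MvPolynomial.pderiv j Q)

lemma baryOp_sum {ι κ : Type*} [Fintype ι] (b w : ι → ℝ) (s : Finset κ)
    (Q : κ → MvPolynomial ι ℝ) : baryOp b w (∑ k ∈ s, Q k) = ∑ k ∈ s, baryOp b w (Q k) := by
  classical
  induction s using Finset.induction_on with
  | empty => simp [baryOp]
  | insert k s hk ih =>
    rw [Finset.sum_insert hk, Finset.sum_insert hk, ← ih]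
    simp only [baryOp, map_add, mul_add, Finset.sum_add_distrib]
    ring

lemma mul_eval_pderiv_monomial {ι : Type*} (w : ι → ℝ) (j : ι) (s : ι →₀ ℕ) (c : ℝ) :
    w j * MvPolynomial.eval w (MvPolynomial.pderiv j (MvPolynomial.monomial s c))
      = s j * MvPolynomial.eval w (MvPolynomial.monomial s c) := by
  have := congrArg (MvPolynomial.eval w)
    (MvPolynomial.X_mul_pderiv_monomial (R := ℝ) (i := j) (m := s) (r := c))
  simpa using this

/-- On a monomial of degree `M`, the operator `baryOp` lowers one exponent at a time, up to a
multiple of the monomial itself. The lowering coefficient at `j` vanishes if `s j = b j + 1`. -/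
lemma baryOp_monomial {ι : Type*} [Fintype ι] (b w : ι → ℝ) (s : ι →₀ ℕ) (c : ℝ) :
    baryOp b w (MvPolynomial.monomial s c)
      = ∑ j, ((s j : ℝ) - 1 - b j)
          * MvPolynomial.eval w (MvPolynomial.pderiv j (MvPolynomial.monomial s c))
        - (∑ j, (s j : ℝ)) * (∑ j, (s j : ℝ) - 1 - ∑ j, b j)
          * MvPolynomial.eval w (MvPolynomial.monomial s c) := by
  classical
  have low : ∀ j l, w l * MvPolynomial.eval w
      (MvPolynomial.pderiv l (MvPolynomial.pderiv j (MvPolynomial.monomial s c)))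
      = ((s l : ℝ) - if l = j then 1 else 0)
        * MvPolynomial.eval w (MvPolynomial.pderiv j (MvPolynomial.monomial s c)) := by
    intro j l
    rw [MvPolynomial.pderiv_monomial, mul_eval_pderiv_monomial]
    rcases Nat.eq_zero_or_pos (s j) with h | h
    · simp [h]
    · congr 1
      rw [Finsupp.tsub_apply, Finsupp.single_apply]
      by_cases hl : l = j
      · subst hl; simp [Nat.cast_sub h]
      · simp [hl, Ne.symm hl]
  have h2 : ∑ j, ∑ l, w j * w l * MvPolynomial.eval w
        (MvPolynomial.pderiv j (MvPolynomial.pderiv l (MvPolynomial.monomial s c)))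
      = (∑ j, (s j : ℝ)) * (∑ j, (s j : ℝ) - 1)
          * MvPolynomial.eval w (MvPolynomial.monomial s c) := by
    have : ∀ j, ∑ l, w j * w l * MvPolynomial.eval w
        (MvPolynomial.pderiv j (MvPolynomial.pderiv l (MvPolynomial.monomial s c)))
        = (s j : ℝ) * ((∑ l, (s l : ℝ) - 1)
          * MvPolynomial.eval w (MvPolynomial.monomial s c)) := by
      intro j
      have e : ∀ l, w j * w l * MvPolynomial.eval w
          (MvPolynomial.pderiv j (MvPolynomial.pderiv l (MvPolynomial.monomial s c)))
          = ((s l : ℝ) - if l = j then 1 else 0)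
            * (s j * MvPolynomial.eval w (MvPolynomial.monomial s c)) := by
        intro l
        rw [← mul_eval_pderiv_monomial, pderiv_comm, mul_assoc, low]
        ring
      rw [Finset.sum_congr rfl fun l _ => e l, ← Finset.sum_mul, Finset.sum_sub_distrib]
      simp only [Finset.sum_ite_eq', Finset.mem_univ, if_true]
      ring
    rw [Finset.sum_congr rfl fun j _ => this j, ← Finset.sum_mul]
    ring
  have h3 : ∑ j, ((∑ i, b i) * w j - b j)
        * MvPolynomial.eval w (MvPolynomial.pderiv j (MvPolynomial.monomial s c))
      = (∑ j, (s j : ℝ)) * (∑ i, b i) * MvPolynomial.eval w (MvPolynomial.monomial s c)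
        - ∑ j, b j * MvPolynomial.eval w (MvPolynomial.pderiv j (MvPolynomial.monomial s c)) := by
    rw [Finset.sum_mul, Finset.sum_mul, ← Finset.sum_sub_distrib]
    refine Finset.sum_congr rfl fun j _ => ?_
    linear_combination (∑ i, b i) * mul_eval_pderiv_monomial w j s c
  have h1 : ∑ j, ((s j : ℝ) - 1 - b j)
          * MvPolynomial.eval w (MvPolynomial.pderiv j (MvPolynomial.monomial s c))
      = ∑ j, w j * MvPolynomial.eval w
          (MvPolynomial.pderiv j (MvPolynomial.pderiv j (MvPolynomial.monomial s c)))
        - ∑ j, b j * MvPolynomial.eval w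
          (MvPolynomial.pderiv j (MvPolynomial.monomial s c)) := by
    rw [← Finset.sum_sub_distrib]
    refine Finset.sum_congr rfl fun j _ => ?_
    rw [low, if_pos rfl]
    ring
  unfold baryOp
  rw [h1, h2, h3]
  ring

/-! ### Annihilation of the Chaundy–Bullard polynomial -/

/-- Index shift in the coordinate `i` for a sum over a box. -/
lemma sum_box_shift {N : ℕ} (d : Fin N → ℕ) (i : Fin N) (f g : (Fin N → ℕ) → ℝ)
    (hf : ∀ k, k i = 0 → f k = 0) (hg : ∀ k, k i = d i → g k = 0)
    (hfg : ∀ k, f (Function.update k i (k i + 1)) = g k) :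
    ∑ k ∈ Fintype.piFinset (fun i => Finset.range (d i + 1)), f k
      = ∑ k ∈ Fintype.piFinset (fun i => Finset.range (d i + 1)), g k := by
  classical
  rw [← Finset.sum_filter_of_ne (p := fun k => k i ≠ 0) (fun k _ h h' => h (hf k h')),
    ← Finset.sum_filter_of_ne (f := g) (p := fun k => k i ≠ d i) (fun k _ h h' => h (hg k h'))]
  refine Finset.sum_nbij' (fun k => Function.update k i (k i - 1))
    (fun k => Function.update k i (k i + 1)) ?_ ?_ ?_ ?_ ?_
  · intro k hk
    simp only [Finset.mem_filter, Fintype.mem_piFinset, Finset.mem_range] at hk ⊢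
    have := hk.1 i
    refine ⟨fun j => ?_, by simp; omega⟩
    by_cases hj : j = i
    · subst hj; simp; omega
    · simpa [hj] using hk.1 j
  · intro k hk
    simp only [Finset.mem_filter, Fintype.mem_piFinset, Finset.mem_range] at hk ⊢
    have := hk.1 i
    refine ⟨fun j => ?_, by simp⟩
    by_cases hj : j = i
    · subst hj; simp; omega
    · simpa [hj] using hk.1 j
  · intro k hk
    have := (Finset.mem_filter.1 hk).2
    simp [Nat.sub_add_cancel (Nat.pos_of_ne_zero this)]
  · intro k _
    simp
  · intro k hk
    have := (Finset.mem_filter.1 hk).2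
    rw [← hfg]
    simp [Nat.sub_add_cancel (Nat.pos_of_ne_zero this)]

/-- The coefficient `(β + 1)_{k_1 + ⋯ + k_N} / (k_1! ⋯ k_N!)`. -/
noncomputable def cbCoeff {N : ℕ} (β : ℕ) (k : Fin N → ℕ) : ℝ :=
  (ascPochhammer ℝ (∑ i, k i)).eval ((β : ℝ) + 1) / ∏ i, ((k i).factorial : ℝ)

/-- The exponent vector `(k_1, …, k_N, β + 1)`. -/
noncomputable def cbExp {N : ℕ} (β : ℕ) (k : Fin N → ℕ) : Fin (N + 1) →₀ ℕ :=
  Finsupp.equivFunOnFinite.symm (Fin.snoc k (β + 1))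

lemma sum_update_succ {N : ℕ} (k : Fin N → ℕ) (i : Fin N) :
    ∑ j, Function.update k i (k i + 1) j = ∑ j, k j + 1 := by
  rw [Finset.sum_update_of_mem (Finset.mem_univ i),
    ← Finset.add_sum_erase _ k (Finset.mem_univ i), Finset.sdiff_singleton_eq_erase]
  ring

lemma cbCoeff_update {N : ℕ} (β : ℕ) (k : Fin N → ℕ) (i : Fin N) :
    cbCoeff β (Function.update k i (k i + 1)) * (k i + 1)
      = cbCoeff β k * ((β : ℝ) + 1 + ∑ j, (k j : ℝ)) := by
  have hp : ∏ j, ((Function.update k i (k i + 1) j).factorial : ℝ)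
      = ((k i : ℝ) + 1) * ∏ j, ((k j).factorial : ℝ) := by
    rw [← Finset.mul_prod_erase _ _ (Finset.mem_univ i),
      ← Finset.mul_prod_erase _ (fun j => ((k j).factorial : ℝ)) (Finset.mem_univ i)]
    have : ∏ j ∈ Finset.univ.erase i, ((Function.update k i (k i + 1) j).factorial : ℝ)
        = ∏ j ∈ Finset.univ.erase i, ((k j).factorial : ℝ) :=
      Finset.prod_congr rfl fun j hj => by simp [Finset.ne_of_mem_erase hj]
    rw [this]
    simp [Nat.factorial_succ]
    ring
  have h1 : ((k i : ℝ) + 1) ≠ 0 := by positivity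
  have h2 : ∏ j, ((k j).factorial : ℝ) ≠ 0 :=
    Finset.prod_ne_zero_iff.2 fun j _ => by positivity
  unfold cbCoeff
  rw [hp, sum_update_succ, ascPochhammer_succ_eval]
  push_cast
  field_simp

lemma cbExp_update_sub {N : ℕ} (β : ℕ) (k : Fin N → ℕ) (i : Fin N) :
    cbExp β (Function.update k i (k i + 1)) - Finsupp.single i.castSucc 1 = cbExp β k := by
  ext m
  induction m using Fin.lastCases with
  | last =>
    simp [cbExp, Function.update_of_ne (Fin.castSucc_lt_last i).ne']
  | cast j =>
    by_cases h : j = i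
    · subst h; simp [cbExp]
    · simp [cbExp, h]

/-- The polynomial
`z_{N+1}^{β+1} ∑_k (β+1)_{|k|} / k! · z_1^{k_1} ⋯ z_N^{k_N}`, summed over the box `k ≤ d`,
as a polynomial in `N + 1` independent variables. -/
noncomputable def cbPoly {N : ℕ} (β : ℕ) (d : Fin N → ℕ) : MvPolynomial (Fin (N + 1)) ℝ :=
  ∑ k ∈ Fintype.piFinset (fun i => Finset.range (d i + 1)),
    MvPolynomial.monomial (cbExp β k) (cbCoeff β k)

lemma eval_cbPoly {N : ℕ} (β : ℕ) (d : Fin N → ℕ) (w : Fin (N + 1) → ℝ) :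
    MvPolynomial.eval w (cbPoly β d) = w (Fin.last N) ^ (β + 1) *
      ∑ k ∈ Fintype.piFinset (fun i => Finset.range (d i + 1)),
        ((ascPochhammer ℝ (∑ i, k i)).eval ((β : ℝ) + 1) / ∏ i, ((k i).factorial : ℝ))
          * ∏ i : Fin N, w i.castSucc ^ k i := by
  rw [cbPoly, map_sum, Finset.mul_sum]
  refine Finset.sum_congr rfl fun k _ => ?_
  rw [MvPolynomial.eval_monomial, Finsupp.prod_fintype _ _ (by simp), Fin.prod_univ_castSucc]
  simp [cbExp, cbCoeff]
  ring

/-- `baryOp` annihilates `cbPoly` identically in all `N + 1` variables: no lowering occurs in the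
last variable, and in the other ones the lowered terms cancel the diagonal ones after an index
shift. -/
lemma baryOp_cbPoly {N : ℕ} (b : Fin (N + 1) → ℕ) (w : Fin (N + 1) → ℝ) :
    baryOp (fun j => (b j : ℝ)) w (cbPoly (b (Fin.last N)) (fun i => b i.castSucc)) = 0 := by
  set β := b (Fin.last N) with hβ
  have hl : ∀ k : Fin N → ℕ, cbExp β k (Fin.last N) = β + 1 := fun k => by simp [cbExp]
  have hc : ∀ (k : Fin N → ℕ) i, cbExp β k i.castSucc = k i := fun k i => by simp [cbExp]
  rw [cbPoly, baryOp_sum]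
  simp only [baryOp_monomial, Fin.sum_univ_castSucc (n := N), hl, hc, Finset.sum_sub_distrib,
    Finset.sum_add_distrib]
  rw [Finset.sum_comm]
  have key : ∀ i : Fin N, ∑ k ∈ Fintype.piFinset (fun i : Fin N => Finset.range (b i.castSucc + 1)),
      ((k i : ℝ) - 1 - b i.castSucc) * MvPolynomial.eval w (MvPolynomial.pderiv i.castSucc
        (MvPolynomial.monomial (cbExp β k) (cbCoeff β k)))
      = ∑ k ∈ Fintype.piFinset (fun i : Fin N => Finset.range (b i.castSucc + 1)),
        ((k i : ℝ) - b i.castSucc) * (((β : ℝ) + 1 + ∑ j, (k j : ℝ)) *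
          MvPolynomial.eval w (MvPolynomial.monomial (cbExp β k) (cbCoeff β k))) := by
    intro i
    apply sum_box_shift (fun i => b i.castSucc) i
    · intro k hk
      simp [MvPolynomial.pderiv_monomial, hc, hk]
    · intro k hk
      simp [hk]
    · intro k
      rw [MvPolynomial.pderiv_monomial, cbExp_update_sub, hc]
      simp only [Function.update_self, MvPolynomial.eval_monomial]
      push_cast
      rw [cbCoeff_update]
      ring
  rw [Finset.sum_congr rfl fun i _ => key i, Finset.sum_comm]
  rw [← Finset.sum_add_distrib, ← Finset.sum_sub_distrib]
  refine Finset.sum_eq_zero fun k _ => ?_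
  rw [← Finset.sum_mul, Finset.sum_sub_distrib]
  push_cast
  rw [← hβ]
  ring

/-! ### The partial differential equation -/

/-- For every permutation `σ`, the function
`f_{a_{σ(1)},…,a_{σ(n)}}(x_{σ(1)},…,x_{σ(n)})` (with `x_n := 1 - x_1 - ⋯ - x_{n-1}`)
satisfies the PDE (62) of Koornwinder–Schlosser.  Here the `n ≥ 2` variables of the
paper are indexed by `Fin (n + 2)`, the first `n + 1` of them via `Fin.castSucc`. -/
theorem chaundy_bullard_pde_inhomogeneous (n : ℕ) (a : Fin (n + 2) → ℕ)
    (σ : Equiv.Perm (Fin (n + 2))) :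
    ∀ x : Fin (n + 1) → ℝ,
      (∑ i : Fin (n + 1), x i * (1 - x i) *
          pd i (pd i (fun x =>
            (Fin.snoc x (1 - ∑ j, x j) : Fin (n + 2) → ℝ) (σ (Fin.last (n + 1)))
                ^ (a (σ (Fin.last (n + 1))) + 1) *
              ∑ k ∈ Fintype.piFinset
                  (fun i : Fin (n + 1) => Finset.range (a (σ i.castSucc) + 1)),
                ((ascPochhammer ℝ (∑ i, k i)).eval ((a (σ (Fin.last (n + 1))) : ℝ) + 1)
                    / ∏ i, ((k i).factorial : ℝ))
                  * ∏ i : Fin (n + 1),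
                      (Fin.snoc x (1 - ∑ j, x j) : Fin (n + 2) → ℝ) (σ i.castSucc) ^ k i)) x)
        - 2 * (∑ i : Fin (n + 1), ∑ j ∈ Finset.univ.filter (fun j => i < j),
            x i * x j *
              pd i (pd j (fun x =>
                (Fin.snoc x (1 - ∑ j, x j) : Fin (n + 2) → ℝ) (σ (Fin.last (n + 1)))
                    ^ (a (σ (Fin.last (n + 1))) + 1) *
                  ∑ k ∈ Fintype.piFinset
                      (fun i : Fin (n + 1) => Finset.range (a (σ i.castSucc) + 1)),
                    ((ascPochhammer ℝ (∑ i, k i)).eval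
                        ((a (σ (Fin.last (n + 1))) : ℝ) + 1)
                        / ∏ i, ((k i).factorial : ℝ))
                      * ∏ i : Fin (n + 1),
                          (Fin.snoc x (1 - ∑ j, x j) : Fin (n + 2) → ℝ)
                            (σ i.castSucc) ^ k i)) x)
        + ∑ i : Fin (n + 1), ((∑ j, (a j : ℝ)) * x i - (a i.castSucc : ℝ)) *
            pd i (fun x =>
              (Fin.snoc x (1 - ∑ j, x j) : Fin (n + 2) → ℝ) (σ (Fin.last (n + 1)))
                  ^ (a (σ (Fin.last (n + 1))) + 1) *
                ∑ k ∈ Fintype.piFinset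
                    (fun i : Fin (n + 1) => Finset.range (a (σ i.castSucc) + 1)),
                  ((ascPochhammer ℝ (∑ i, k i)).eval ((a (σ (Fin.last (n + 1))) : ℝ) + 1)
                      / ∏ i, ((k i).factorial : ℝ))
                    * ∏ i : Fin (n + 1),
                        (Fin.snoc x (1 - ∑ j, x j) : Fin (n + 2) → ℝ)
                          (σ i.castSucc) ^ k i) x = 0 := by
  intro x
  have hv : (fun x : Fin (n + 1) → ℝ =>
      (Fin.snoc x (1 - ∑ j, x j) : Fin (n + 2) → ℝ) (σ (Fin.last (n + 1)))
          ^ (a (σ (Fin.last (n + 1))) + 1) *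
        ∑ k ∈ Fintype.piFinset
            (fun i : Fin (n + 1) => Finset.range (a (σ i.castSucc) + 1)),
          ((ascPochhammer ℝ (∑ i, k i)).eval ((a (σ (Fin.last (n + 1))) : ℝ) + 1)
              / ∏ i, ((k i).factorial : ℝ))
            * ∏ i : Fin (n + 1),
                (Fin.snoc x (1 - ∑ j, x j) : Fin (n + 2) → ℝ) (σ i.castSucc) ^ k i)
      = fun x => MvPolynomial.eval
          (fun j => (Fin.snoc x (1 - ∑ j, x j) : Fin (n + 2) → ℝ) (σ j))
          (cbPoly (a (σ (Fin.last (n + 1)))) (fun i => a (σ i.castSucc))) := by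
    funext y
    rw [eval_cbPoly]
  rw [hv]
  simp only [pd_eval]
  simp only [map_sub]
  have hbary := baryOp_cbPoly (fun j => a (σ j))
    (fun j => (Fin.snoc x (1 - ∑ j, x j) : Fin (n + 2) → ℝ) (σ j))
  set Q := cbPoly (a (σ (Fin.last (n + 1)))) (fun i => a (σ i.castSucc))
  set w : Fin (n + 2) → ℝ := fun j => (Fin.snoc x (1 - ∑ j, x j) : Fin (n + 2) → ℝ) (σ j) with hw
  have h := operator_barycentric x (fun j => (a j : ℝ))
    (fun m => MvPolynomial.eval w (MvPolynomial.pderiv (σ.symm m) Q))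
    (fun m l => MvPolynomial.eval w
      (MvPolynomial.pderiv (σ.symm m) (MvPolynomial.pderiv (σ.symm l) Q)))
    (fun m l => by rw [pderiv_comm]) _ rfl
  have hσ := operator_reindex σ (Fin.snoc x (1 - ∑ j, x j) : Fin (n + 2) → ℝ)
    (fun j => (a j : ℝ))
    (fun m => MvPolynomial.eval w (MvPolynomial.pderiv (σ.symm m) Q))
    (fun m l => MvPolynomial.eval w
      (MvPolynomial.pderiv (σ.symm m) (MvPolynomial.pderiv (σ.symm l) Q)))
  simp only [Equiv.symm_apply_apply] at h hσ
  rw [h, hσ]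
  exact hbary
end

section
/- Let n ≥ 1 be an integer, let a_1, …, a_{n+1} be nonnegative integers, let x = (x_1,…,x_n) ∈ ℝ^n satisfy x_i > 0 for all i and x_1+⋯+x_n < 1, and set x_{n+1} := 1 − x_1 − ⋯ − x_n. Fix i ∈ {1,…,n+1}, and let σ be the cyclic permutation of {1,…,n+1} (a power of the cycle (1 2 ⋯ n+1)) with σ(n) = i. Let Δ_n^{(i)}(x) ⊂ ℝ^n be the convex hull of {x} together with the n points obtained from {0, e_1, …, e_n} by deleting e_i if 1 ≤ i ≤ n, and by deleting 0 if i = n+1. Then ∫_{Δ_n^{(i)}(x)} t_1^{a_1} ⋯ t_n^{a_n} (1 - t_1 - ⋯ - t_n)^{a_{n+1}} dt = ( a_1! ⋯ a_{n+1}! / (a_1+⋯+a_{n+1}+n)! ) · Σ_{k_1=0}^{a_{σ(n+1)}} Σ_{k_2=0}^{a_{σ(1)}} ⋯ Σ_{k_n=0}^{a_{σ(n-1)}} ( (a_{σ(n)}+1)_{k_1+⋯+k_n} / (k_1! ⋯ k_n!) ) · x_{σ(n+1)}^{k_1} x_{σ(1)}^{k_2} ⋯ x_{σ(n-1)}^{k_n}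 · x_{σ(n)}^{a_{σ(n)}+1}, where the integral is with respect to Lebesgue measure on ℝ^n. -/
/-!
In barycentric coordinates the claim is a binomial expansion of Dirichlet's integral.

Write `bary t` for the coordinates `(t_1, …, t_n, 1 - ∑ t)`, so that the integrand is
`∏ j, (bary t j) ^ a j`. The simplex `Δ_n^{(i)}(x)` is the image of the standard simplex under the
affine map `w ↦ w + bary w i • (x - v_i)`, which sends the vertex `v_i` to `x` and fixes the others
(`image_replaceVert`). Its Jacobian is `bary x i`, and it transforms the coordinates by
`t_i = w_i x_i` and `t_j = w_j + w_i x_j` for `j ≠ i` (`bary_replaceVert`).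

Expanding each `(w_j + w_i x_j) ^ a_j` with `j ≠ i` gives a sum over `k` of monomials in the `w_j`
with exponent `a_i + ∑ k` at `i` and `a_j - k_j` elsewhere. By Dirichlet's integral
(`dirichlet_integral_bary`) such a monomial integrates to
`(a_i + ∑ k)! ∏ (a_j - k_j)! / (∑ a + n)!`; combined with the binomial coefficients and
`(a_i + ∑ k)! = a_i! (a_i + 1)_{∑ k}` this is the stated summand. The order in which the indices
`j ≠ i` are listed is irrelevant, so of `σ` only its injectivity and `σ(n) = i` matter.
-/

open Polynomial MeasureTheory

/-! ### Dirichlet's integral on the corner simplex -/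

/-- The Beta integral with integer parameters, scaled to `[0, r]`; induction on `p` by parts. -/
lemma beta_integral_nat (p : ℕ) : ∀ (q : ℕ) (r : ℝ),
    ∫ t in (0 : ℝ)..r, t ^ p * (r - t) ^ q
      = (p.factorial * q.factorial : ℝ) / ((p + q + 1).factorial : ℝ) * r ^ (p + q + 1) := by
  induction p with
  | zero =>
    intro q r
    have h := intervalIntegral.integral_comp_sub_left (a := 0) (b := r) (fun t : ℝ => t ^ q) r
    simp only [pow_zero, one_mul, h, sub_self, sub_zero, integral_pow, zero_add,
      Nat.factorial_succ, Nat.factorial_zero]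
    have := Nat.factorial_ne_zero q
    push_cast
    field_simp
    simp
  | succ p ih =>
    intro q r
    have hv : ∀ t : ℝ, HasDerivAt (fun t : ℝ => -(r - t) ^ (q + 1) / (q + 1)) ((r - t) ^ q) t := by
      intro t
      have h := ((((hasDerivAt_id t).const_sub r).pow (q + 1)).neg).div_const ((q : ℝ) + 1)
      convert! h using 1
      have : (q : ℝ) + 1 ≠ 0 := by positivity
      field_simp
      simp [mul_comm]
    have hu : ∀ t : ℝ, HasDerivAt (fun t : ℝ => t ^ (p + 1)) (((p + 1 : ℕ) : ℝ) * t ^ p) t :=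
      fun t => by simpa using hasDerivAt_pow (p + 1) t
    rw [intervalIntegral.integral_mul_deriv_eq_deriv_mul (fun t _ => hu t) (fun t _ => hv t)
      (by apply Continuous.intervalIntegrable; fun_prop)
      (by apply Continuous.intervalIntegrable; fun_prop)]
    have h2 : ∀ t : ℝ, ((p + 1 : ℕ) : ℝ) * t ^ p * (-(r - t) ^ (q + 1) / (q + 1))
        = (-((p + 1 : ℕ) : ℝ) / (q + 1)) * (t ^ p * (r - t) ^ (q + 1)) := fun t => by ring
    simp only [h2, intervalIntegral.integral_const_mul, ih]
    have e : p + (q + 1) + 1 = p + 1 + q + 1 := by ring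
    rw [e, Nat.factorial_succ p, Nat.factorial_succ q]
    have := Nat.factorial_ne_zero (p + 1 + q + 1)
    push_cast
    field_simp
    simp

/-- The corner simplex `{t ≥ 0, t_1 + ⋯ + t_n ≤ r}` in `ℝ^n`. -/
def cornerSimplex (n : ℕ) (r : ℝ) : Set (Fin n → ℝ) := {t | (∀ j, 0 ≤ t j) ∧ ∑ j, t j ≤ r}

lemma isCompact_cornerSimplex (n : ℕ) (r : ℝ) : IsCompact (cornerSimplex n r) := by
  have hc : IsClosed (cornerSimplex n r) := by
    have h : cornerSimplex n r = (⋂ j, {t | 0 ≤ t j}) ∩ {t | ∑ j, t j ≤ r} := by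
      ext t; simp [cornerSimplex]
    rw [h]
    exact (isClosed_iInter fun j => isClosed_le continuous_const (continuous_apply j)).inter
      (isClosed_le (by fun_prop) continuous_const)
  refine (isCompact_Icc (a := (0 : Fin n → ℝ)) (b := fun _ => r)).of_isClosed_subset hc ?_
  rintro t ⟨h0, h1⟩
  exact ⟨h0, fun j => (Finset.single_le_sum (fun k _ => h0 k) (Finset.mem_univ j)).trans h1⟩

/-- Dirichlet's integral with integer exponents. Keeping the size `r` free makes the induction on
`n` close without rescaling: integrating out all variables but the first leaves the Beta integral
`∫ s^{a_0} (r - s)^q ds`. -/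
lemma dirichlet_integral_corner (n : ℕ) : ∀ (a : Fin n → ℕ) (b : ℕ) (r : ℝ), 0 ≤ r →
    ∫ t in cornerSimplex n r, (∏ j, t j ^ a j) * (r - ∑ j, t j) ^ b
      = ((∏ j, ((a j).factorial : ℝ)) * b.factorial) / (((∑ j, a j) + b + n).factorial : ℝ)
        * r ^ ((∑ j, a j) + b + n) := by
  induction n with
  | zero =>
    intro a b r hr
    have : cornerSimplex 0 r = Set.univ := by ext t; simp [cornerSimplex, hr]
    have hb : (b.factorial : ℝ) ≠ 0 := by exact_mod_cast b.factorial_ne_zero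
    simp [this, hb, measureReal_def, volume_pi]
  | succ n ih =>
    intro a b r hr
    have hmeas := (isCompact_cornerSimplex (n + 1) r).measurableSet
    set g : (Fin (n + 1) → ℝ) → ℝ := (cornerSimplex (n + 1) r).indicator
      fun t => (∏ j, t j ^ a j) * (r - ∑ j, t j) ^ b with hg
    have hgi : Integrable g := by
      rw [hg, integrable_indicator_iff hmeas]
      exact ContinuousOn.integrableOn_compact (isCompact_cornerSimplex _ _)
        (by apply Continuous.continuousOn; fun_prop)
    have hmp := (volume_preserving_piFinSuccAbove (fun _ : Fin (n + 1) => ℝ) 0).symm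
    rw [← integral_indicator hmeas, ← hg, ← hmp.integral_comp',
      Measure.volume_eq_prod, integral_prod]
    swap
    · rw [← Measure.volume_eq_prod]
      exact (hmp.integrable_comp_emb (MeasurableEquiv.measurableEmbedding _)).2 hgi
    -- the inner integral is the same integral over a simplex of size `r - s`
    have hinner : ∀ s : ℝ, ∫ t : Fin n → ℝ,
        g ((MeasurableEquiv.piFinSuccAbove (fun _ : Fin (n + 1) => ℝ) 0).symm (s, t))
        = (Set.Icc 0 r).indicator (fun s => s ^ a 0 *
            ∫ t in cornerSimplex n (r - s),
              (∏ j, t j ^ a j.succ) * ((r - s) - ∑ j, t j) ^ b) s := by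
      intro s
      by_cases hs : s ∈ Set.Icc 0 r
      · rw [Set.indicator_of_mem hs, ← integral_const_mul,
          ← integral_indicator (isCompact_cornerSimplex _ _).measurableSet]
        congr 1
        ext t
        have hiff : ((MeasurableEquiv.piFinSuccAbove (fun _ : Fin (n + 1) => ℝ) 0).symm (s, t))
            ∈ cornerSimplex (n + 1) r ↔ t ∈ cornerSimplex n (r - s) := by
          simp [cornerSimplex, Fin.forall_fin_succ, Fin.sum_univ_succ, hs.1, le_sub_iff_add_le',
            MeasurableEquiv.piFinSuccAbove]
        by_cases ht : t ∈ cornerSimplex n (r - s)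
        · rw [hg, Set.indicator_of_mem (hiff.2 ht), Set.indicator_of_mem ht]
          simp [Fin.prod_univ_succ, Fin.sum_univ_succ, MeasurableEquiv.piFinSuccAbove]
          ring
        · rw [hg, Set.indicator_of_notMem (fun h => ht (hiff.1 h)), Set.indicator_of_notMem ht]
      · rw [Set.indicator_of_notMem hs]
        apply integral_eq_zero_of_ae
        filter_upwards with t
        apply Set.indicator_of_notMem
        rintro ⟨h0, h1⟩
        apply hs
        have h00 := h0 0
        have h0' := fun j : Fin n => h0 j.succ
        simp [MeasurableEquiv.piFinSuccAbove, Fin.sum_univ_succ] at h00 h0' h1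
        have := Finset.sum_nonneg (fun j (_ : j ∈ Finset.univ) => h0' j)
        exact ⟨h00, by linarith⟩
    simp only [hinner]
    rw [integral_indicator measurableSet_Icc]
    have hstep : ∀ s ∈ Set.Icc 0 r, s ^ a 0 * ∫ t in cornerSimplex n (r - s),
              (∏ j, t j ^ a j.succ) * ((r - s) - ∑ j, t j) ^ b
        = (((∏ j : Fin n, ((a j.succ).factorial : ℝ)) * b.factorial)
            / (((∑ j : Fin n, a j.succ) + b + n).factorial : ℝ))
          * (s ^ a 0 * (r - s) ^ ((∑ j : Fin n, a j.succ) + b + n)) := by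
      intro s hs
      rw [ih (fun j => a j.succ) b (r - s) (by linarith [hs.2])]
      ring
    rw [setIntegral_congr_fun measurableSet_Icc hstep, integral_const_mul,
      integral_Icc_eq_integral_Ioc, ← intervalIntegral.integral_of_le hr, beta_integral_nat,
      Fin.prod_univ_succ, Fin.sum_univ_succ]
    have e : a 0 + ((∑ j : Fin n, a j.succ) + b + n) + 1
        = a 0 + (∑ j : Fin n, a j.succ) + b + (n + 1) := by ring
    rw [e]
    have h1 : ((((∑ j : Fin n, a j.succ) + b + n).factorial : ℕ) : ℝ) ≠ 0 := by positivity
    field_simp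

/-! ### Barycentric coordinates -/

/-- Barycentric coordinates of `w ∈ ℝ^n` relative to `e_1, …, e_n, 0`; the last one belongs to the
origin. -/
noncomputable def bary {n : ℕ} (w : Fin n → ℝ) : Fin (n + 1) → ℝ := Fin.snoc w (1 - ∑ j, w j)

/-- The vertices `e_1, …, e_n, 0` of the standard simplex, in this order. -/
noncomputable def vert (n : ℕ) : Fin (n + 1) → (Fin n → ℝ) :=
  Fin.snoc (fun j : Fin n => Pi.single j (1 : ℝ)) 0

/-- The linear part of the affine function `w ↦ bary w j`. -/
noncomputable def baryLin (n : ℕ) : Fin (n + 1) → Module.Dual ℝ (Fin n → ℝ) :=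
  Fin.snoc (fun j => LinearMap.proj j) (-∑ j, LinearMap.proj j)

lemma bary_add {n : ℕ} (w v : Fin n → ℝ) (j : Fin (n + 1)) :
    bary (w + v) j = bary w j + baryLin n j v := by
  refine Fin.lastCases ?_ (fun j => ?_) j
  · simp [bary, baryLin, Finset.sum_add_distrib]; ring
  · simp [bary, baryLin]

lemma bary_vert {n : ℕ} (i j : Fin (n + 1)) : bary (vert n i) j = if j = i then 1 else 0 := by
  refine Fin.lastCases ?_ (fun j => ?_) j <;> refine Fin.lastCases ?_ (fun i => ?_) i
  · simp [bary, vert]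
  · simp [bary, vert, (Fin.castSucc_lt_last i).ne']
  · simp [bary, vert, (Fin.castSucc_lt_last j).ne]
  · simp [bary, vert, Pi.single_apply]

lemma sum_bary {n : ℕ} (w : Fin n → ℝ) : ∑ j, bary w j = 1 := by
  simp [Fin.sum_univ_castSucc, bary]

lemma sum_bary_smul_vert {n : ℕ} (w : Fin n → ℝ) : ∑ j, bary w j • vert n j = w := by
  ext k
  simp [Fin.sum_univ_castSucc, bary, vert, Pi.single_apply]

lemma mem_cornerSimplex_iff {n : ℕ} {w : Fin n → ℝ} :
    w ∈ cornerSimplex n 1 ↔ ∀ j, 0 ≤ bary w j := by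
  simp [cornerSimplex, Fin.forall_fin_succ', bary]

lemma baryLin_sub_vert {n : ℕ} (x : Fin n → ℝ) (i j : Fin (n + 1)) :
    baryLin n j (x - vert n i) = bary x j - if j = i then 1 else 0 := by
  have h := bary_add (vert n i) (x - vert n i) j
  rw [add_sub_cancel, bary_vert] at h
  linarith

lemma convexHull_vert (n : ℕ) : convexHull ℝ (Set.range (vert n)) = cornerSimplex n 1 := by
  apply Set.Subset.antisymm
  · apply convexHull_min
    · rintro _ ⟨i, rfl⟩
      rw [mem_cornerSimplex_iff]
      intro j
      rw [bary_vert]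
      split_ifs <;> norm_num
    · rintro t ⟨ht, ht'⟩ u ⟨hu, hu'⟩ p q hp hq hpq
      refine ⟨fun j => ?_, ?_⟩
      · have := mul_nonneg hp (ht j)
        have := mul_nonneg hq (hu j)
        simp; linarith
      · simp only [Pi.add_apply, Pi.smul_apply, smul_eq_mul, Finset.sum_add_distrib,
          ← Finset.mul_sum]
        nlinarith
  · intro w hw
    rw [← sum_bary_smul_vert w]
    exact (convex_convexHull ℝ _).sum_mem (fun j _ => mem_cornerSimplex_iff.1 hw j) (sum_bary w)
      fun j _ => subset_convexHull ℝ _ ⟨j, rfl⟩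

/-! ### Replacing a vertex -/

/-- The affine map that sends the vertex `vert n i` to `x` and fixes the other vertices. -/
noncomputable def replaceVert {n : ℕ} (x : Fin n → ℝ) (i : Fin (n + 1)) (w : Fin n → ℝ) :
    Fin n → ℝ := w + bary w i • (x - vert n i)

lemma bary_replaceVert {n : ℕ} (x : Fin n → ℝ) (i : Fin (n + 1)) (w : Fin n → ℝ)
    (j : Fin (n + 1)) :
    bary (replaceVert x i w) j = bary w j + bary w i * (bary x j - if j = i then 1 else 0) := by
  rw [replaceVert, bary_add, map_smul, baryLin_sub_vert, smul_eq_mul]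

/-- `replaceVert` is a translate of a rank-one perturbation of the identity; this gives its affinity,
its derivative and its determinant. -/
lemma replaceVert_eq {n : ℕ} (x : Fin n → ℝ) (i : Fin (n + 1)) (w : Fin n → ℝ) :
    replaceVert x i w = LinearMap.transvection (baryLin n i) (x - vert n i) w
      + bary 0 i • (x - vert n i) := by
  have h := bary_add 0 w i
  rw [zero_add] at h
  rw [replaceVert, LinearMap.transvection.apply, h, add_smul]
  abel

lemma image_replaceVert {n : ℕ} (x : Fin n → ℝ) (i : Fin (n + 1)) :
    replaceVert x i '' cornerSimplex n 1 = convexHull ℝ (insert x (vert n '' {j | j ≠ i})) := by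
  let A : (Fin n → ℝ) →ᵃ[ℝ] (Fin n → ℝ) :=
    (LinearMap.transvection (baryLin n i) (x - vert n i)).toAffineMap
      + AffineMap.const ℝ _ (bary 0 i • (x - vert n i))
  have hA : ⇑A = replaceVert x i := by
    ext1 w
    rw [replaceVert_eq]
    simp [A]
  have hv : ∀ j, replaceVert x i (vert n j) = if j = i then x else vert n j := by
    intro j
    rw [replaceVert, bary_vert]
    by_cases h : j = i
    · simp [h]
    · simp [h, Ne.symm h]
  rw [← convexHull_vert, ← hA, A.image_convexHull, hA]
  congr 1
  ext t
  simp only [Set.mem_image, Set.mem_range, exists_exists_eq_and, Set.mem_insert_iff, hv,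
    Set.mem_ofPred_eq]
  constructor
  · rintro ⟨j, rfl⟩
    by_cases h : j = i
    · simp [h]
    · exact Or.inr ⟨j, h, by simp [h]⟩
  · rintro (rfl | ⟨j, h, rfl⟩)
    · exact ⟨i, by simp⟩
    · exact ⟨j, by simp [h]⟩

/-- Change of variables from `Δ_n^{(i)}(x)` to the standard simplex. The Jacobian is
`1 + baryLin i (x - vert i) = bary x i`. -/
lemma integral_replaceVert {n : ℕ} (x : Fin n → ℝ) (i : Fin (n + 1)) (hx : 0 < bary x i)
    (g : (Fin n → ℝ) → ℝ) :
    ∫ t in convexHull ℝ (insert x (vert n '' {j | j ≠ i})), g t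
      = bary x i * ∫ w in cornerSimplex n 1, g (replaceVert x i w) := by
  have hinj : Function.Injective (replaceVert x i) := by
    intro w w' h
    have h1 := congrArg (fun t => bary t i) h
    simp only [bary_replaceVert, if_true] at h1
    have h2 : bary w i = bary w' i := mul_right_cancel₀ hx.ne' (by linarith)
    simpa [replaceVert, h2] using h
  have hd : ∀ w ∈ cornerSimplex n 1, HasFDerivWithinAt (replaceVert x i)
      (LinearMap.transvection (baryLin n i) (x - vert n i)).toContinuousLinearMap
      (cornerSimplex n 1) w := by
    intro w _
    rw [funext (replaceVert_eq x i)]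
    exact ((LinearMap.toContinuousLinearMap _).hasFDerivAt.add_const _).hasFDerivWithinAt
  have hdet : (LinearMap.transvection (baryLin n i)
      (x - vert n i)).toContinuousLinearMap.det = bary x i := by
    rw [ContinuousLinearMap.det, LinearMap.coe_toContinuousLinearMap, LinearMap.transvection.det,
      baryLin_sub_vert, if_pos rfl]
    ring
  rw [← image_replaceVert, integral_image_eq_integral_abs_det_fderiv_smul volume
    (isCompact_cornerSimplex n 1).measurableSet hd hinj.injOn]
  simp only [hdet, abs_of_pos hx, smul_eq_mul, integral_const_mul]

lemma dirichlet_integral_bary (n : ℕ) (b : Fin (n + 1) → ℕ) :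
    ∫ w in cornerSimplex n 1, ∏ j, bary w j ^ b j
      = (∏ j, ((b j).factorial : ℝ)) / (((∑ j, b j) + n).factorial : ℝ) := by
  have h := dirichlet_integral_corner n (fun j => b j.castSucc) (b (Fin.last n)) 1 zero_le_one
  simpa [Fin.prod_univ_castSucc, Fin.sum_univ_castSucc, bary] using h

lemma continuous_bary {n : ℕ} (j : Fin (n + 1)) : Continuous fun w : Fin n → ℝ => bary w j := by
  refine Fin.lastCases ?_ (fun j => ?_) j
  · simp only [bary, Fin.snoc_last]; fun_prop
  · simp only [bary, Fin.snoc_castSucc]; fun_prop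

/-! ### Expansion of the integrand -/

/-- The integral formula for an arbitrary enumeration `ρ` of the indices different from `i`. -/
theorem dirichlet_integral_piece_of_enumeration {n : ℕ} (a : Fin (n + 1) → ℕ) (x : Fin n → ℝ) (i : Fin (n + 1)) (hx : 0 < bary x i)
    (ρ : Fin n → Fin (n + 1)) (hρ : Function.Injective ρ) (hi : ∀ p, ρ p ≠ i) :
    ∫ t in convexHull ℝ (insert x (vert n '' {j | j ≠ i})), ∏ j, bary t j ^ a j
      = ((∏ j, ((a j).factorial : ℝ)) / (((∑ j, a j) + n).factorial : ℝ))
        * ∑ k ∈ Fintype.piFinset (fun p => Finset.range (a (ρ p) + 1)),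
            ((ascPochhammer ℝ (∑ p, k p)).eval ((a i : ℝ) + 1) / ∏ p, ((k p).factorial : ℝ))
              * (∏ p, bary x (ρ p) ^ k p) * bary x i ^ (a i + 1) := by
  classical
  -- `i` and the values of `ρ` enumerate all indices
  let e : Option (Fin n) ≃ Fin (n + 1) := Equiv.ofBijective (fun o => o.elim i ρ) (by
    rw [Fintype.bijective_iff_injective_and_card]
    refine ⟨?_, by simp⟩
    rintro (_ | p) (_ | q) h
    · rfl
    · exact (hi q h.symm).elim
    · exact (hi p h).elim
    · exact congrArg some (hρ h))
  have hprod : ∀ f : Fin (n + 1) → ℝ, ∏ j, f j = f i * ∏ p, f (ρ p) := fun f => by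
    rw [← e.prod_comp, Fintype.prod_option]; rfl
  have hsum : ∀ f : Fin (n + 1) → ℕ, ∑ j, f j = f i + ∑ p, f (ρ p) := fun f => by
    rw [← e.sum_comp, Fintype.sum_option]; rfl
  -- the exponents of the monomial selected by `k`
  let b : (Fin n → ℕ) → Fin (n + 1) → ℕ := fun k j =>
    (e.symm j).elim (a i + ∑ p, k p) fun p => a (ρ p) - k p
  have hbi : ∀ k, b k i = a i + ∑ p, k p := fun k => by
    have : e.symm i = none := e.symm_apply_eq.2 rfl
    simp [b, this]
  have hbρ : ∀ k p, b k (ρ p) = a (ρ p) - k p := fun k p => by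
    have : e.symm (ρ p) = some p := e.symm_apply_eq.2 rfl
    simp [b, this]
  have hexp : ∀ w, ∏ j, bary (replaceVert x i w) j ^ a j
      = ∑ k ∈ Fintype.piFinset (fun p => Finset.range (a (ρ p) + 1)),
          (bary x i ^ a i * ∏ p, (bary x (ρ p) ^ k p * ((a (ρ p)).choose (k p) : ℝ)))
            * ∏ j, bary w j ^ b k j := by
    intro w
    rw [hprod]
    have h1 : ∀ p, bary (replaceVert x i w) (ρ p) ^ a (ρ p)
        = ∑ k ∈ Finset.range (a (ρ p) + 1), (bary w i * bary x (ρ p)) ^ k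
            * bary w (ρ p) ^ (a (ρ p) - k) * ((a (ρ p)).choose k : ℝ) := by
      intro p
      rw [bary_replaceVert, if_neg (hi p), sub_zero, add_comm, add_pow]
    have h2 : bary (replaceVert x i w) i = bary w i * bary x i := by
      rw [bary_replaceVert, if_pos rfl]; ring
    simp only [h1, h2]
    rw [Finset.prod_univ_sum, Finset.mul_sum]
    refine Finset.sum_congr rfl fun k _ => ?_
    rw [hprod, hbi]
    simp only [hbρ, mul_pow, Finset.prod_mul_distrib, pow_add, Finset.prod_pow_eq_pow_sum]
    ring
  rw [integral_replaceVert x i hx]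
  simp only [hexp]
  rw [integral_finsetSum]
  swap
  · intro k _
    refine ContinuousOn.integrableOn_compact (isCompact_cornerSimplex n 1) ?_
    apply Continuous.continuousOn
    exact continuous_const.mul
      (continuous_finsetProd _ fun j _ => (continuous_bary j).pow _)
  rw [Finset.mul_sum, Finset.mul_sum]
  refine Finset.sum_congr rfl fun k hk => ?_
  have hk' : ∀ p, k p ≤ a (ρ p) := fun p => by
    have := Fintype.mem_piFinset.1 hk p
    simp at this; omega
  have hdeg : ∑ j, b k j = ∑ j, a j := by
    rw [hsum, hsum a, hbi, add_assoc, ← Finset.sum_add_distrib]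
    congr 1
    refine Finset.sum_congr rfl fun p _ => ?_
    rw [hbρ, Nat.add_sub_cancel' (hk' p)]
  rw [integral_const_mul, dirichlet_integral_bary, hdeg, hprod,
    hprod (fun j => ((a j).factorial : ℝ)), hbi]
  have hasc : ((a i + ∑ p, k p).factorial : ℝ)
      = (a i).factorial * (ascPochhammer ℝ (∑ p, k p)).eval ((a i : ℝ) + 1) := by
    rw [← Nat.factorial_mul_ascFactorial, ← ascPochhammer_nat_eq_ascFactorial]
    push_cast [ascPochhammer_eval_cast]
    rfl
  have hchoose : (∏ p, ((a (ρ p)).choose (k p) : ℝ)) * ∏ p, ((b k (ρ p)).factorial : ℝ)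
      = (∏ p, ((a (ρ p)).factorial : ℝ)) / ∏ p, ((k p).factorial : ℝ) := by
    rw [← Finset.prod_mul_distrib, ← Finset.prod_div_distrib]
    refine Finset.prod_congr rfl fun p _ => ?_
    rw [hbρ, eq_div_iff (by positivity), ← Nat.choose_mul_factorial_mul_factorial (hk' p)]
    push_cast
    ring
  rw [hasc, Finset.prod_mul_distrib]
  calc _ = ((∏ p, ((a (ρ p)).choose (k p) : ℝ)) * ∏ p, ((b k (ρ p)).factorial : ℝ))
        * ((a i).factorial * (ascPochhammer ℝ (∑ p, k p)).eval ((a i : ℝ) + 1)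
          * (∏ p, bary x (ρ p) ^ k p) * bary x i ^ (a i + 1)
          / (((∑ j, a j) + n).factorial : ℝ)) := by ring
    _ = _ := by rw [hchoose]; ring

/-- Evaluation of the Dirichlet-type integral over the simplex `Δ_n^{(i)}(x)`
(Theorem 10.3 of Koornwinder–Schlosser).  Here the paper's `n ≥ 1` is `m + 1`, the
`n + 1` parameters `a_1, …, a_{n+1}` are indexed (0-based) by `Fin (m + 2)`, and the
integration variables `t_1, …, t_n` by `Fin (m + 1)`.  The vertices `e_1, …, e_n, 0`
are `vert 0, …, vert (n-1), vert n` with `vert := Fin.snoc (fun j => Pi.single j 1) 0`;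
the simplex `Δ_n^{(i)}(x)` is the convex hull of `x` and the vertices `vert j`, `j ≠ i`.
The permutation `σ` is a cyclic shift (`σ j = j + c`) with `σ(n) = i` (0-based:
`σ ⟨m⟩ = i`), and `τ = (n+1, 1, 2, …, n-1)` (0-based: `Fin.cons (Fin.last (m+1))
(fun j : Fin m => j.castSucc.castSucc)`) lists the positions of the summation bounds. -/
theorem dirichlet_integral_simplex_piece (m : ℕ) (a : Fin (m + 2) → ℕ)
    (x : Fin (m + 1) → ℝ) (hx : ∀ j, 0 < x j) (hs : ∑ j, x j < 1)
    (i : Fin (m + 2)) (σ : Fin (m + 2) → Fin (m + 2))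
    (hσ : ∃ c : Fin (m + 2), ∀ j, σ j = j + c)
    (hσi : σ (Fin.castSucc (Fin.last m)) = i) :
    (∫ t in convexHull ℝ
        (insert x
          ((Fin.snoc (fun j : Fin (m + 1) => Pi.single j (1 : ℝ)) 0 :
              Fin (m + 2) → (Fin (m + 1) → ℝ)) '' {j | j ≠ i})),
      (∏ j, t j ^ a j.castSucc) * (1 - ∑ j, t j) ^ a (Fin.last (m + 1)))
      = ((∏ j, ((a j).factorial : ℝ)) / (((∑ j, a j) + (m + 1)).factorial : ℝ))
        * ∑ k ∈ Fintype.piFinset (fun p : Fin (m + 1) =>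
            Finset.range (a (σ ((Fin.cons (Fin.last (m + 1))
              (fun j : Fin m => j.castSucc.castSucc) : Fin (m + 1) → Fin (m + 2)) p)) + 1)),
            ((ascPochhammer ℝ (∑ p, k p)).eval ((a i : ℝ) + 1)
                / ∏ p, ((k p).factorial : ℝ))
              * (∏ p : Fin (m + 1),
                  (Fin.snoc x (1 - ∑ j, x j) : Fin (m + 2) → ℝ)
                      (σ ((Fin.cons (Fin.last (m + 1))
                        (fun j : Fin m => j.castSucc.castSucc) :
                          Fin (m + 1) → Fin (m + 2)) p)) ^ k p)
              * (Fin.snoc x (1 - ∑ j, x j) : Fin (m + 2) → ℝ) i ^ (a i + 1) := by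
  obtain ⟨c, hc⟩ := hσ
  have hσinj : Function.Injective σ := fun j j' h => by
    rw [hc, hc] at h
    exact add_right_cancel h
  have hτinj : Function.Injective (Fin.cons (Fin.last (m + 1))
      (fun j : Fin m => j.castSucc.castSucc) : Fin (m + 1) → Fin (m + 2)) := by
    rw [Fin.cons_injective_iff]
    refine ⟨?_, (Fin.castSucc_injective _).comp (Fin.castSucc_injective _)⟩
    rintro ⟨j, h⟩
    exact (Fin.castSucc_lt_last _).ne h
  have hτ : ∀ p, (Fin.cons (Fin.last (m + 1))
      (fun j : Fin m => j.castSucc.castSucc) : Fin (m + 1) → Fin (m + 2)) p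
        ≠ Fin.castSucc (Fin.last m) := by
    intro p
    refine Fin.cases ?_ (fun p => ?_) p
    · simpa using (Fin.castSucc_lt_last (Fin.last m)).ne'
    · intro h
      simp only [Fin.cons_succ] at h
      exact (Fin.castSucc_lt_last p).ne (Fin.castSucc_injective _ h)
  have hpos : 0 < bary x i := by
    refine Fin.lastCases ?_ (fun j => ?_) i
    · simpa [bary] using hs
    · simpa [bary] using hx j
  have h := dirichlet_integral_piece_of_enumeration a x i hpos _ (hσinj.comp hτinj) fun p hp => hτ p (hσinj (hp.trans hσi.symm))
  refine Eq.trans (congrArg (integral _) (funext fun t => ?_)) h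
  simp only [Fin.prod_univ_castSucc, bary, Fin.snoc_castSucc, Fin.snoc_last]
end
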